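/- Lemma 2.4 (lem: 3.2): For every subset I ⊆ {1,…,m} with #I = l and every subset J ⊆ {1,…,m} ∖ I there exists an invertible element ω_{I,J} ∈ H(B_m) which is a finite product of elements H_i and H_i⁻¹ (0 ≤ i ≤ m−1) such that Ψ(ω_{I,J})(V̄_{I,J}) = V̄_{{1,…,l},∅} = V^⊗l ⊗ η_{r+3/2}^⊗(m−l). -/

import Mathlib

/-!
Sort the indices of `V̄` into three classes: the bottom index, the inner indices `𝕀(2r+2)`, and the
top index, in increasing order. Each `V̄_{I,J}` is then the span of the `M_f` whose sequence of
classes is a fixed pattern `t`. If `t p < t (p+1)`, every such `f` has `f p < f (p+1)`, so the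
generator interchanging positions `p` and `p+1` maps `M_f` to a single basis vector and carries the
`t`-span onto the span for the swapped pattern; its inverse goes back. Hence all rearrangements of a
pattern are linked by words in the generators (adjacent transpositions generate the symmetric
group). Similarly `H_0` turns a top class in the first position into a bottom class, so `H_0⁻¹` does
the opposite. Conjugating by a rearrangement, any bottom class may be made top; after removing all
of them, a rearrangement brings `I` to the front.

Invertibility of the generators comes from the quadratic relation: the inverse of `H` is
`H + q - q⁻¹`.
-/

noncomputable section

open scoped BigOperators

set_option maxHeartbeats 1000000
set_option synthInstance.maxHeartbeats 400000

/-- The field `ℚ(q)`. -/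
abbrev Kq : Type := RatFunc ℚ

/-- The element `q`, transcendental over `ℚ`. -/
def qv : Kq := RatFunc.X

/-- Index set `𝕀(2r+4)`: the `j`-th element represents the half-integer `j - r - 3/2`. -/
abbrev Idx (r : ℕ) := Fin (2*r+4)

/-- The space `V̄`, with basis `η_j` indexed by `𝕀(2r+4)` (coordinate form). -/
abbrev Vb (r : ℕ) := Idx r → Kq

/-- The tensor power `V̄^⊗m` (coordinates with respect to the basis `M_f`). -/
abbrev TP (r m : ℕ) := (Fin m → Idx r) → Kq

/-- Basis vector `M_f = η_{f 0} ⊗ ⋯ ⊗ η_{f (m-1)}`. -/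
def Mf {r m : ℕ} (f : Fin m → Idx r) : TP r m := Pi.single f 1

/-- For a quantum-group index `a : Fin (2r+3)` (representing `i = a - r - 1 ∈ [-r-1, r+1]`),
the index of `η_{i - 1/2}`. -/
def loI {r : ℕ} (a : Fin (2*r+3)) : Idx r := ⟨a.1, by have := a.2; omega⟩

/-- The index of `η_{i + 1/2}`. -/
def hiI {r : ℕ} (a : Fin (2*r+3)) : Idx r := ⟨a.1+1, by have := a.2; omega⟩

/-- The index of `η_{-r-3/2}`. -/
def botI (r : ℕ) : Idx r := ⟨0, by omega⟩

/-- The index of `η_{r+3/2}`. -/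
def topI (r : ℕ) : Idx r := ⟨2*r+3, by omega⟩

/-- A linear endomorphism of `V̄` of the shape `v ↦ (j ↦ c j * v (t j))`. -/
def diagMove (r : ℕ) (c : Idx r → Kq) (t : Idx r → Idx r) : Module.End Kq (Vb r) where
  toFun v := fun j => c j * v (t j)
  map_add' u v := by funext j; simp [Pi.add_apply, mul_add]
  map_smul' s v := by
    funext j
    simp only [Pi.smul_apply, smul_eq_mul, RingHom.id_apply]
    ring

/-- The operator `e_i` on `V̄`: `e_i η_{i+1/2} = η_{i-1/2}`, zero on other basis vectors. -/
def opE (r : ℕ) (a : Fin (2*r+3)) : Module.End Kq (Vb r) :=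
  diagMove r (fun j => if j = loI a then 1 else 0) (fun j => if j = loI a then hiI a else j)

/-- The operator `f_i` on `V̄`: `f_i η_{i-1/2} = η_{i+1/2}`, zero on other basis vectors. -/
def opF (r : ℕ) (a : Fin (2*r+3)) : Module.End Kq (Vb r) :=
  diagMove r (fun j => if j = hiI a then 1 else 0) (fun j => if j = hiI a then loI a else j)

/-- The operator `κ_i` on `V̄`. -/
def opK (r : ℕ) (a : Fin (2*r+3)) : Module.End Kq (Vb r) :=
  diagMove r (fun j => if j = loI a then qv else if j = hiI a then qv⁻¹ else 1) id

/-- The operator `κ_i⁻¹` on `V̄`. -/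
def opKinv (r : ℕ) (a : Fin (2*r+3)) : Module.End Kq (Vb r) :=
  diagMove r (fun j => if j = loI a then qv⁻¹ else if j = hiI a then qv else 1) id

/-- A linear endomorphism of `V̄^⊗m` given by a "matrix" `c`. -/
def matOp (r m : ℕ) (c : (Fin m → Idx r) → (Fin m → Idx r) → Kq) : Module.End Kq (TP r m) where
  toFun v := fun g => ∑ f : Fin m → Idx r, c g f * v f
  map_add' u v := by
    funext g
    simp [Pi.add_apply, mul_add, Finset.sum_add_distrib]
  map_smul' s v := by
    funext g
    simp only [Pi.smul_apply, smul_eq_mul, RingHom.id_apply, Finset.mul_sum]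
    exact Finset.sum_congr rfl (fun f _ => by ring)

/-- The tensor product `A 0 ⊗ A 1 ⊗ ⋯ ⊗ A (m-1)` of endomorphisms of `V̄`,
as an endomorphism of `V̄^⊗m`. -/
def tensorOp (r m : ℕ) (A : Fin m → Module.End Kq (Vb r)) : Module.End Kq (TP r m) :=
  matOp r m (fun g f => ∏ k : Fin m, (A k) (Pi.single (f k) 1) (g k))
/-- `𝔼_i = Σ_j id^{⊗(j-1)} ⊗ e_i ⊗ (κ_i⁻¹)^{⊗(m-j)}` on `V̄^⊗m`. -/
def opEE (r m : ℕ) (a : Fin (2*r+3)) : Module.End Kq (TP r m) :=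
  ∑ j : Fin m, tensorOp r m (fun k =>
    if (k : ℕ) < (j : ℕ) then 1 else if k = j then opE r a else opKinv r a)

/-- `𝔽_i = Σ_j κ_i^{⊗(j-1)} ⊗ f_i ⊗ id^{⊗(m-j)}` on `V̄^⊗m`. -/
def opFF (r m : ℕ) (a : Fin (2*r+3)) : Module.End Kq (TP r m) :=
  ∑ j : Fin m, tensorOp r m (fun k =>
    if (k : ℕ) < (j : ℕ) then opK r a else if k = j then opF r a else 1)

/-- `𝕂_i = κ_i^{⊗m}`. -/
def opKK (r m : ℕ) (a : Fin (2*r+3)) : Module.End Kq (TP r m) :=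
  tensorOp r m (fun _ => opK r a)

/-- `𝕂_i⁻¹ = (κ_i⁻¹)^{⊗m}`. -/
def opKKinv (r m : ℕ) (a : Fin (2*r+3)) : Module.End Kq (TP r m) :=
  tensorOp r m (fun _ => opKinv r a)

/-- `𝕜_i = 𝕂_i 𝕂_{-i}⁻¹` (the index `-i` corresponds to `Fin.rev a`). -/
def opkk (r m : ℕ) (a : Fin (2*r+3)) : Module.End Kq (TP r m) :=
  opKK r m a * opKKinv r m a.rev

/-- `𝕜_i⁻¹ = 𝕂_{-i} 𝕂_i⁻¹`. -/
def opkkInv (r m : ℕ) (a : Fin (2*r+3)) : Module.End Kq (TP r m) :=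
  opKK r m a.rev * opKKinv r m a

/-- The index `a` corresponding to `i = 0`. -/
def midI (r : ℕ) : Fin (2*r+3) := ⟨r+1, by omega⟩

/-- `ℬ_i = 𝔼_i + 𝔽_{-i} 𝕂_i⁻¹` for `i ≠ 0`. -/
def opB (r m : ℕ) (a : Fin (2*r+3)) : Module.End Kq (TP r m) :=
  opEE r m a + opFF r m a.rev * opKKinv r m a

/-- `ℬ_0 = 𝔼_0 + q 𝔽_0 𝕂_0⁻¹ + 𝕂_0⁻¹`. -/
def opB0 (r m : ℕ) : Module.End Kq (TP r m) :=
  opEE r m (midI r) + qv • (opFF r m (midI r) * opKKinv r m (midI r)) + opKKinv r m (midI r)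

/-- Generating set of the Levi-type ıquantum group image `Φ(L_q^ı)`:
`ℬ_0`, the `ℬ_i` with `0 ≠ i`, `-r ≤ i ≤ r`, and the `𝕜_i^{±1}` with `-r-1 ≤ i ≤ r+1`. -/
def LeviSet (r m : ℕ) : Set (Module.End Kq (TP r m)) :=
  {opB0 r m} ∪ (opB r m '' {a | a ≠ midI r ∧ 0 < (a : ℕ) ∧ (a : ℕ) < 2*r+2}) ∪
    Set.range (opkk r m) ∪ Set.range (opkkInv r m)

/-- `Φ(L_q^ı)`, the image of the Levi-type ıquantum group in `End(V̄^⊗m)`. -/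
def PhiL (r m : ℕ) : Subalgebra Kq (Module.End Kq (TP r m)) :=
  Algebra.adjoin Kq (LeviSet r m)

/-- The operator `Ψ(H_0)` on `V̄^⊗m`. -/
def R0op (r m : ℕ) : Module.End Kq (TP r m) :=
  if h : 0 < m then
    { toFun := fun v g =>
        v (Function.update g ⟨0, h⟩ (Fin.rev (g ⟨0, h⟩))) +
          (if g ⟨0, h⟩ < Fin.rev (g ⟨0, h⟩) then (qv⁻¹ - qv) * v g else 0)
      map_add' := fun u v => by
        funext g
        simp only [Pi.add_apply]
        split_ifs <;> ring
      map_smul' := fun s v => by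
        funext g
        simp only [Pi.smul_apply, smul_eq_mul, RingHom.id_apply]
        split_ifs <;> ring }
  else 1

/-- The operator `Ψ(H_{p+1})` on `V̄^⊗m`, interchanging tensor positions `p` and `p+1`
(0-based). -/
def Rsw (r m : ℕ) (p : ℕ) : Module.End Kq (TP r m) :=
  if h : p + 1 < m then
    { toFun := fun v g =>
        if g ⟨p, by omega⟩ = g ⟨p+1, h⟩ then qv⁻¹ * v g
        else v (g ∘ Equiv.swap ⟨p, by omega⟩ ⟨p+1, h⟩) +
          (if g ⟨p+1, h⟩ < g ⟨p, by omega⟩ then (qv⁻¹ - qv) * v g else 0)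
      map_add' := fun u v => by
        funext g
        simp only [Pi.add_apply, Function.comp_apply]
        split_ifs <;> ring
      map_smul' := fun s v => by
        funext g
        simp only [Pi.smul_apply, smul_eq_mul, RingHom.id_apply, Function.comp_apply]
        split_ifs <;> ring }
  else 1

/-- The operator `Ψ(H_i)` on `V̄^⊗m`, for `0 ≤ i ≤ m-1`. -/
def RopN (r m : ℕ) (i : ℕ) : Module.End Kq (TP r m) :=
  if i = 0 then R0op r m else Rsw r m (i - 1)
/-- `j ∈ 𝕀(2r+2)`, i.e. `η_j ∈ V`. -/
def innerI (r : ℕ) (j : Idx r) : Prop := j ≠ botI r ∧ j ≠ topI r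

/-- `f` indexes a basis vector of `V^{⊗l} ⊗ η_{r+3/2}^{⊗(m-l)}`. -/
def goodF (r m : ℕ) (l : ℕ) (f : Fin m → Idx r) : Prop :=
  ∀ k : Fin m, ((k : ℕ) < l → innerI r (f k)) ∧ (l ≤ (k : ℕ) → f k = topI r)

/-- The subspace `V̄_{{1,…,l},∅} = V^{⊗l} ⊗ η_{r+3/2}^{⊗(m-l)}` of `V̄^⊗m`. -/
def Vsub (r m : ℕ) (l : ℕ) : Submodule Kq (TP r m) :=
  Submodule.span Kq {v | ∃ f, goodF r m l f ∧ v = Mf f}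

/-- The subspace `V̄_{I,J}` of `V̄^⊗m`. -/
def VIJ (r m : ℕ) (I J : Finset (Fin m)) : Submodule Kq (TP r m) :=
  Submodule.span Kq {v | ∃ f : Fin m → Idx r,
    (∀ k : Fin m, (k ∈ I → innerI r (f k)) ∧ (k ∈ J → f k = botI r) ∧
      (k ∉ I → k ∉ J → f k = topI r)) ∧ v = Mf f}

/-- The subspace `V̄_l = ⊕_{#I = l, J} V̄_{I,J}` of `V̄^⊗m`. -/
def Vlevel (r m : ℕ) (l : ℕ) : Submodule Kq (TP r m) :=
  Submodule.span Kq {v | ∃ f : Fin m → Idx r,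
    Nat.card {k : Fin m // innerI r (f k)} = l ∧ v = Mf f}

/-- The length (number of inversions) of a permutation of `{0, …, l-1}`. -/
def lenPerm {l : ℕ} (σ : Equiv.Perm (Fin l)) : ℕ :=
  (Finset.univ.filter (fun p : Fin l × Fin l => p.1 < p.2 ∧ σ p.2 < σ p.1)).card

/-- The simple transposition interchanging `p` and `p+1` (0-based) in `𝔖_l`;
this is the paper's `s_{p+1}`. -/
def adjSwap (l : ℕ) (p : ℕ) : Equiv.Perm (Fin l) :=
  if h : p + 1 < l then Equiv.swap ⟨p, by omega⟩ ⟨p+1, h⟩ else 1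

/-- The first descent of a permutation, if any. -/
def descentIdx {l : ℕ} (σ : Equiv.Perm (Fin l)) : Option ℕ :=
  (List.range l).find? (fun p =>
    if h : p + 1 < l then decide (σ ⟨p+1, h⟩ < σ ⟨p, by omega⟩) else false)

/-- Canonical reduced word construction (with fuel). -/
def permWordAux {l : ℕ} : ℕ → Equiv.Perm (Fin l) → List ℕ
  | 0, _ => []
  | (fuel+1), σ =>
    match descentIdx σ with
    | none => []
    | some p => permWordAux fuel (σ * adjSwap l p) ++ [p]

/-- A canonical reduced word for `σ`: `σ = s_{p₁+1} ⋯ s_{p_k+1}` (paper indexing)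
where `permWord σ = [p₁, …, p_k]`, and `k = ℓ(σ)`. -/
def permWord {l : ℕ} (σ : Equiv.Perm (Fin l)) : List ℕ := permWordAux (lenPerm σ) σ

/-- The operator `Ψ(H_σ)` on `V̄^⊗m` for a permutation `σ ∈ 𝔖_l` (`l ≤ m`), where
`H_σ = H_{i₁} ⋯ H_{i_k}` for a reduced expression `σ = s_{i₁} ⋯ s_{i_k}`; since `Ψ` is an
anti-homomorphism this is the product of the `Ψ(H_i)` in reversed order. -/
def opPerm (r m : ℕ) {l : ℕ} (σ : Equiv.Perm (Fin l)) : Module.End Kq (TP r m) :=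
  (((permWord σ).map (fun p => RopN r m (p+1))).reverse).prod

/-- `A` is a finite product of the operators `Ψ(H_i)^{±1}`, `0 ≤ i ≤ m-1`. -/
def IsRWord (r m : ℕ) (A : Module.End Kq (TP r m)) : Prop :=
  ∃ ws : List (Module.End Kq (TP r m)), A = ws.prod ∧
    ∀ u ∈ ws, ∃ i : ℕ, i < m ∧
      (u = RopN r m i ∨ (u * RopN r m i = 1 ∧ RopN r m i * u = 1))
/-- Generator `H_i` of the free algebra on `m` letters. -/
def Hvar (m : ℕ) (i : Fin m) : FreeAlgebra Kq (Fin m) := FreeAlgebra.ι Kq i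

/-- The defining relations of the Iwahori–Hecke algebra `H(B_m)` of type `B_m`. -/
inductive HBrel (m : ℕ) : FreeAlgebra Kq (Fin m) → FreeAlgebra Kq (Fin m) → Prop
  | quad (i : Fin m) :
      HBrel m ((Hvar m i - algebraMap Kq _ qv⁻¹) * (Hvar m i + algebraMap Kq _ qv)) 0
  | braid (i : ℕ) (h1 : 1 ≤ i) (h2 : i + 1 < m) :
      HBrel m (Hvar m ⟨i, by omega⟩ * Hvar m ⟨i+1, h2⟩ * Hvar m ⟨i, by omega⟩)
              (Hvar m ⟨i+1, h2⟩ * Hvar m ⟨i, by omega⟩ * Hvar m ⟨i+1, h2⟩)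
  | comm (i j : Fin m) (h : (i : ℕ) + 1 < (j : ℕ) ∨ (j : ℕ) + 1 < (i : ℕ)) :
      HBrel m (Hvar m i * Hvar m j) (Hvar m j * Hvar m i)
  | braid0 (h : 1 < m) :
      HBrel m (Hvar m ⟨0, by omega⟩ * Hvar m ⟨1, h⟩ * Hvar m ⟨0, by omega⟩ * Hvar m ⟨1, h⟩)
              (Hvar m ⟨1, h⟩ * Hvar m ⟨0, by omega⟩ * Hvar m ⟨1, h⟩ * Hvar m ⟨0, by omega⟩)

/-- The Iwahori–Hecke algebra `H(B_m)` of type `B_m` over `ℚ(q)`. -/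
abbrev HeckeB (m : ℕ) := RingQuot (HBrel m)

/-- The generator `H_i ∈ H(B_m)`. -/
def Hgen (m : ℕ) (i : Fin m) : HeckeB m := RingQuot.mkAlgHom Kq (HBrel m) (Hvar m i)

/-- The generator `H_j ∈ H(B_m)` with out-of-range indices sent to `1`. -/
def HgenN (m : ℕ) (j : ℕ) : HeckeB m := if h : j < m then Hgen m ⟨j, h⟩ else 1

/-- The element `H_w ∈ H(B_m)` for `w ∈ 𝔖_m ⊂ 𝒲(B_m)`, defined via a reduced expression
for `w` (well defined by Matsumoto's theorem). -/
def HpermB (m : ℕ) (w : Equiv.Perm (Fin m)) : HeckeB m :=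
  ((permWord w).map (fun p => HgenN m (p+1))).prod

/-- Generators of the duplex Hecke algebra: the `T_i` and the `x_σ^{(l)}`. -/
def DGen (m : ℕ) : Type := (Fin m) ⊕ (Σ l : Fin (m+1), Equiv.Perm (Fin (l : ℕ)))

/-- The generator `T_i` of the free algebra. -/
def Tvar (m : ℕ) (i : Fin m) : FreeAlgebra Kq (DGen m) := FreeAlgebra.ι Kq (Sum.inl i)

/-- The generator `x_σ^{(l)}` of the free algebra. -/
def Xvar (m : ℕ) (l : Fin (m+1)) (σ : Equiv.Perm (Fin (l : ℕ))) : FreeAlgebra Kq (DGen m) :=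
  FreeAlgebra.ι Kq (Sum.inr ⟨l, σ⟩)

/-- The defining relations of the duplex Hecke algebra `𝓗_m` of type `B`. -/
inductive DHrel (m : ℕ) : FreeAlgebra Kq (DGen m) → FreeAlgebra Kq (DGen m) → Prop
  | quadT (i : Fin m) :
      DHrel m ((Tvar m i + algebraMap Kq _ qv) * (Tvar m i - algebraMap Kq _ qv⁻¹)) 0
  | braidT (i : ℕ) (h1 : 1 ≤ i) (h2 : i + 1 < m) :
      DHrel m (Tvar m ⟨i, by omega⟩ * Tvar m ⟨i+1, h2⟩ * Tvar m ⟨i, by omega⟩)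
              (Tvar m ⟨i+1, h2⟩ * Tvar m ⟨i, by omega⟩ * Tvar m ⟨i+1, h2⟩)
  | commT (i j : Fin m) (h : (i : ℕ) + 1 < (j : ℕ) ∨ (j : ℕ) + 1 < (i : ℕ)) :
      DHrel m (Tvar m i * Tvar m j) (Tvar m j * Tvar m i)
  | braid0T (h : 1 < m) :
      DHrel m (Tvar m ⟨0, by omega⟩ * Tvar m ⟨1, h⟩ * Tvar m ⟨0, by omega⟩ * Tvar m ⟨1, h⟩)
              (Tvar m ⟨1, h⟩ * Tvar m ⟨0, by omega⟩ * Tvar m ⟨1, h⟩ * Tvar m ⟨0, by omega⟩)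
  | xRightUp (l : Fin (m+1)) (σ : Equiv.Perm (Fin (l : ℕ))) (p : ℕ) (hp : p + 1 < (l : ℕ))
      (hlen : lenPerm (σ * adjSwap (l : ℕ) p) = lenPerm σ + 1) :
      DHrel m (Xvar m l σ * Xvar m l (adjSwap (l : ℕ) p)) (Xvar m l (σ * adjSwap (l : ℕ) p))
  | xRightDown (l : Fin (m+1)) (σ : Equiv.Perm (Fin (l : ℕ))) (p : ℕ) (hp : p + 1 < (l : ℕ))
      (hlen : lenPerm (σ * adjSwap (l : ℕ) p) + 1 = lenPerm σ) :
      DHrel m (Xvar m l σ * Xvar m l (adjSwap (l : ℕ) p))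
              (Xvar m l (σ * adjSwap (l : ℕ) p) + algebraMap Kq _ (qv⁻¹ - qv) * Xvar m l σ)
  | xLeftUp (l : Fin (m+1)) (σ : Equiv.Perm (Fin (l : ℕ))) (p : ℕ) (hp : p + 1 < (l : ℕ))
      (hlen : lenPerm (adjSwap (l : ℕ) p * σ) = lenPerm σ + 1) :
      DHrel m (Xvar m l (adjSwap (l : ℕ) p) * Xvar m l σ) (Xvar m l (adjSwap (l : ℕ) p * σ))
  | xLeftDown (l : Fin (m+1)) (σ : Equiv.Perm (Fin (l : ℕ))) (p : ℕ) (hp : p + 1 < (l : ℕ))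
      (hlen : lenPerm (adjSwap (l : ℕ) p * σ) + 1 = lenPerm σ) :
      DHrel m (Xvar m l (adjSwap (l : ℕ) p) * Xvar m l σ)
              (Xvar m l (adjSwap (l : ℕ) p * σ) + algebraMap Kq _ (qv⁻¹ - qv) * Xvar m l σ)
  | xOrtho (l k : Fin (m+1)) (h : l ≠ k) (σ : Equiv.Perm (Fin (l : ℕ)))
      (γ : Equiv.Perm (Fin (k : ℕ))) :
      DHrel m (Xvar m l σ * Xvar m k γ) 0
  | TxMid (i : ℕ) (l : Fin (m+1)) (h0 : 0 < i) (hil : i < (l : ℕ))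
      (σ : Equiv.Perm (Fin (l : ℕ))) :
      DHrel m (Tvar m ⟨i, by have := l.2; omega⟩ * Xvar m l σ)
              (Xvar m l (adjSwap (l : ℕ) (i-1)) * Xvar m l σ)
  | xTMid (i : ℕ) (l : Fin (m+1)) (h0 : 0 < i) (hil : i < (l : ℕ))
      (σ : Equiv.Perm (Fin (l : ℕ))) :
      DHrel m (Xvar m l σ * Tvar m ⟨i, by have := l.2; omega⟩)
              (Xvar m l σ * Xvar m l (adjSwap (l : ℕ) (i-1)))
  | TxBig (i : Fin m) (l : Fin (m+1)) (h : (l : ℕ) < (i : ℕ)) (σ : Equiv.Perm (Fin (l : ℕ))) :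
      DHrel m (Tvar m i * Xvar m l σ) (algebraMap Kq _ qv⁻¹ * Xvar m l σ)
  | xTBig (i : Fin m) (l : Fin (m+1)) (h : (l : ℕ) < (i : ℕ)) (σ : Equiv.Perm (Fin (l : ℕ))) :
      DHrel m (Xvar m l σ * Tvar m i) (algebraMap Kq _ qv⁻¹ * Xvar m l σ)

/-- The duplex Hecke algebra `𝓗_m` of type `B` over `ℚ(q)`. -/
abbrev DuplexH (m : ℕ) := RingQuot (DHrel m)

/-- The generator `T_i ∈ 𝓗_m`. -/
def Tg (m : ℕ) (i : Fin m) : DuplexH m := RingQuot.mkAlgHom Kq (DHrel m) (Tvar m i)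

/-- The generator `x_σ^{(l)} ∈ 𝓗_m`. -/
def Xg (m : ℕ) (l : Fin (m+1)) (σ : Equiv.Perm (Fin (l : ℕ))) : DuplexH m :=
  RingQuot.mkAlgHom Kq (DHrel m) (Xvar m l σ)

/-! ### Index classes and pattern spans -/

/-- The class of an index: `0` for the bottom index, `2` for the top index, `1` for the inner
indices. -/
def idxClass (r : ℕ) (j : Idx r) : Fin 3 :=
  if j = botI r then 0 else if j = topI r then 2 else 1

/-- The span of the basis vectors `M_f` for which `f` has class pattern `t`. -/
def patSpan (r : ℕ) {m : ℕ} (t : Fin m → Fin 3) : Submodule Kq (TP r m) :=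
  Submodule.span Kq {v | ∃ f : Fin m → Idx r, (∀ k, idxClass r (f k) = t k) ∧ v = Mf f}

/-- Some invertible word in the `Ψ(H_i)^{±1}` carries the span of pattern `t` onto that of `t'`. -/
def Moves (r : ℕ) {m : ℕ} (t t' : Fin m → Fin 3) : Prop :=
  ∃ A B : Module.End Kq (TP r m), IsRWord r m A ∧ A * B = 1 ∧ B * A = 1 ∧
    Submodule.map A (patSpan r t) = patSpan r t'

lemma qv_ne_zero : qv ≠ 0 := RatFunc.X_ne_zero

lemma idxClass_lt {r : ℕ} {a b : Idx r} (h : idxClass r a < idxClass r b) : a < b := by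
  have ha := a.2
  have hb := b.2
  simp only [idxClass, botI, topI, Fin.ext_iff, Fin.lt_def] at *
  split_ifs at h <;> simp at h <;> omega

lemma idxClass_eq_zero {r : ℕ} {a : Idx r} : idxClass r a = 0 ↔ a = botI r := by
  unfold idxClass; split_ifs <;> simp_all

lemma idxClass_eq_two {r : ℕ} {a : Idx r} : idxClass r a = 2 ↔ a = topI r := by
  have : botI r ≠ topI r := by simp [botI, topI, Fin.ext_iff]
  unfold idxClass; split_ifs <;> simp_all

lemma idxClass_eq_one {r : ℕ} {a : Idx r} : idxClass r a = 1 ↔ innerI r a := by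
  unfold idxClass innerI; split_ifs <;> simp_all

/-! ### Words -/

lemma IsRWord.one (r m : ℕ) : IsRWord r m 1 := ⟨[], by simp, by simp⟩

lemma IsRWord.mul {r m : ℕ} {A B : Module.End Kq (TP r m)} (hA : IsRWord r m A)
    (hB : IsRWord r m B) : IsRWord r m (A * B) := by
  obtain ⟨wa, rfl, ha⟩ := hA
  obtain ⟨wb, rfl, hb⟩ := hB
  refine ⟨wa ++ wb, by simp, fun u hu => ?_⟩
  rcases List.mem_append.1 hu with h | h
  exacts [ha u h, hb u h]

lemma Moves.refl {r m : ℕ} (t : Fin m → Fin 3) : Moves r t t :=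
  ⟨1, 1, IsRWord.one r m, by simp, by simp, Submodule.map_id _⟩

lemma Moves.trans {r m : ℕ} {t t' t'' : Fin m → Fin 3} (h : Moves r t t') (h' : Moves r t' t'') :
    Moves r t t'' := by
  obtain ⟨A, B, hw, h1, h2, h3⟩ := h
  obtain ⟨C, D, hwC, hCD, hDC, hC⟩ := h'
  refine ⟨C * A, B * D, hwC.mul hw, ?_, ?_, ?_⟩
  · rw [mul_assoc, ← mul_assoc A, h1, one_mul, hCD]
  · rw [mul_assoc, ← mul_assoc D, hDC, one_mul, h2]
  · rw [Module.End.mul_eq_comp, Submodule.map_comp, h3, hC]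

/-- A quadratic Hecke relation makes the operator invertible. -/
lemma inverse_of_quad {r m : ℕ} {A : Module.End Kq (TP r m)}
    (h : A * A = (qv⁻¹ - qv) • A + 1) :
    A * (A - (qv⁻¹ - qv) • 1) = 1 ∧ (A - (qv⁻¹ - qv) • 1) * A = 1 := by
  constructor
  · rw [mul_sub, h, mul_smul_comm, mul_one]; abel
  · rw [sub_mul, h, smul_mul_assoc, one_mul]; abel

/-- A generator carrying one pattern span onto another gives moves in both directions, the backward
one by means of the inverse generator. -/
lemma Moves.of_gen {r m i : ℕ} (hi : i < m)
    (hq : RopN r m i * RopN r m i = (qv⁻¹ - qv) • RopN r m i + 1) {t t' : Fin m → Fin 3}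
    (h : Submodule.map (RopN r m i) (patSpan r t) = patSpan r t') :
    Moves r t t' ∧ Moves r t' t := by
  obtain ⟨h1, h2⟩ := inverse_of_quad hq
  refine ⟨⟨_, _, ⟨[RopN r m i], by simp, by simpa using ⟨i, hi, Or.inl rfl⟩⟩, h1, h2, h⟩, ?_⟩
  refine ⟨_, _, ⟨[RopN r m i - (qv⁻¹ - qv) • 1], by simp, ?_⟩, h2, h1, ?_⟩
  · intro u hu
    rw [List.mem_singleton] at hu
    subst hu
    exact ⟨i, hi, Or.inr ⟨h2, h1⟩⟩
  · rw [← h, ← Submodule.map_comp, ← Module.End.mul_eq_comp, h2]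
    exact Submodule.map_id _

/-! ### The generators on pattern spans -/

lemma Rsw_quad {r m p : ℕ} (h : p + 1 < m) :
    Rsw r m p * Rsw r m p = (qv⁻¹ - qv) • Rsw r m p + 1 := by
  have hq := qv_ne_zero
  refine LinearMap.ext fun v => funext fun g => ?_
  have hs : (g ∘ Equiv.swap (⟨p, by omega⟩ : Fin m) ⟨p+1, h⟩) ∘
      Equiv.swap (⟨p, by omega⟩ : Fin m) ⟨p+1, h⟩ = g := by
    ext k; simp
  simp only [Module.End.mul_apply, LinearMap.add_apply, LinearMap.smul_apply, Pi.add_apply,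
    Pi.smul_apply, Module.End.one_apply, smul_eq_mul, Rsw, dif_pos h, LinearMap.coe_mk,
    AddHom.coe_mk, hs]
  simp only [Function.comp_apply, Equiv.swap_apply_left, Equiv.swap_apply_right]
  rcases lt_trichotomy (g ⟨p, by omega⟩) (g ⟨p+1, h⟩) with h1 | h1 | h1
  · simp only [h1.ne, h1.ne', h1, h1.not_gt, if_true, if_false]; ring
  · simp only [h1, if_true]; field_simp; ring
  · simp only [h1.ne, h1.ne', h1, h1.not_gt, if_true, if_false]; ring

lemma rev_ne_self {r : ℕ} (a : Idx r) : Fin.rev a ≠ a := by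
  have := a.2
  simp only [ne_eq, Fin.ext_iff, Fin.val_rev]; omega

lemma R0op_quad {r m : ℕ} (h : 0 < m) :
    R0op r m * R0op r m = (qv⁻¹ - qv) • R0op r m + 1 := by
  refine LinearMap.ext fun v => funext fun g => ?_
  simp only [Module.End.mul_apply, LinearMap.add_apply, LinearMap.smul_apply, Pi.add_apply,
    Pi.smul_apply, Module.End.one_apply, smul_eq_mul, R0op, dif_pos h, LinearMap.coe_mk,
    AddHom.coe_mk, Function.update_self, Fin.rev_rev, Function.update_idem,
    Function.update_eq_self]
  rcases lt_or_gt_of_ne (rev_ne_self (g ⟨0, h⟩)) with h1 | h1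
  · simp only [h1, h1.not_gt, if_true, if_false]; ring
  · simp only [h1, h1.not_gt, if_true, if_false]; ring

lemma Rsw_Mf {r m p : ℕ} (h : p + 1 < m) {f : Fin m → Idx r}
    (hf : f ⟨p, by omega⟩ < f ⟨p+1, h⟩) :
    Rsw r m p (Mf f) = Mf (f ∘ Equiv.swap ⟨p, by omega⟩ ⟨p+1, h⟩) := by
  funext g
  simp only [Rsw, dif_pos h, LinearMap.coe_mk, AddHom.coe_mk, Mf, Pi.single_apply]
  have e : g ∘ Equiv.swap (⟨p, by omega⟩ : Fin m) ⟨p+1, h⟩ = f ↔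
      g = f ∘ Equiv.swap (⟨p, by omega⟩ : Fin m) ⟨p+1, h⟩ := by
    constructor <;> rintro rfl <;> ext k <;> simp
  simp only [e]
  by_cases h1 : g = f
  · subst h1
    simp [hf.ne, hf.not_gt]
  · by_cases h2 : g = f ∘ Equiv.swap (⟨p, by omega⟩ : Fin m) ⟨p+1, h⟩
    · subst h2
      simp [hf.ne', h1]
    · simp [h1, h2]

lemma R0op_Mf {r m : ℕ} (h : 0 < m) {f : Fin m → Idx r}
    (hf : Fin.rev (f ⟨0, h⟩) < f ⟨0, h⟩) :
    R0op r m (Mf f) = Mf (Function.update f ⟨0, h⟩ (Fin.rev (f ⟨0, h⟩))) := by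
  funext g
  simp only [R0op, dif_pos h, LinearMap.coe_mk, AddHom.coe_mk, Mf, Pi.single_apply]
  have e : Function.update g ⟨0, h⟩ (Fin.rev (g ⟨0, h⟩)) = f ↔
      g = Function.update f ⟨0, h⟩ (Fin.rev (f ⟨0, h⟩)) := by
    constructor <;> rintro rfl <;> simp
  simp only [e]
  by_cases h1 : g = f
  · subst h1
    simp [hf.not_gt]
  · simp [h1]

/-- Adjacent entries of a pattern may be interchanged. -/
lemma Moves.swap {r m p : ℕ} (h : p + 1 < m) (t : Fin m → Fin 3) :
    Moves r t (t ∘ Equiv.swap ⟨p, by omega⟩ ⟨p+1, h⟩) := by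
  have key : ∀ t : Fin m → Fin 3, t ⟨p, by omega⟩ < t ⟨p+1, h⟩ →
      Moves r t (t ∘ Equiv.swap ⟨p, by omega⟩ ⟨p+1, h⟩) ∧
      Moves r (t ∘ Equiv.swap ⟨p, by omega⟩ ⟨p+1, h⟩) t := by
    intro t ht
    have hR : RopN r m (p+1) = Rsw r m p := by simp [RopN]
    apply Moves.of_gen h (by rw [hR]; exact Rsw_quad h)
    rw [hR, patSpan, patSpan, Submodule.map_span]
    congr 1
    ext v
    constructor
    · rintro ⟨_, ⟨f, hf, rfl⟩, rfl⟩
      refine ⟨_, fun k => ?_, Rsw_Mf h (idxClass_lt (by rw [hf, hf]; exact ht))⟩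
      exact hf _
    · rintro ⟨f, hf, rfl⟩
      have hf' : ∀ k, idxClass r ((f ∘ Equiv.swap ⟨p, by omega⟩ ⟨p+1, h⟩) k) = t k := by
        intro k
        simp [hf]
      refine ⟨_, ⟨_, hf', rfl⟩, ?_⟩
      rw [Rsw_Mf h (idxClass_lt (by rw [hf', hf']; exact ht))]
      congr 1
      ext k; simp
  rcases lt_trichotomy (t ⟨p, by omega⟩) (t ⟨p+1, h⟩) with h1 | h1 | h1
  · exact (key t h1).1
  · rw [show t ∘ Equiv.swap (⟨p, by omega⟩ : Fin m) ⟨p+1, h⟩ = t from ?_]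
    · exact Moves.refl t
    · funext k
      simp only [Function.comp_apply, Equiv.swap_apply_def]
      split_ifs with h2 h3 <;> simp_all
  · have := (key (t ∘ Equiv.swap (⟨p, by omega⟩ : Fin m) ⟨p+1, h⟩) (by simpa using h1)).2
    rwa [show (t ∘ Equiv.swap (⟨p, by omega⟩ : Fin m) ⟨p+1, h⟩) ∘
      Equiv.swap (⟨p, by omega⟩ : Fin m) ⟨p+1, h⟩ = t by ext k; simp] at this

/-- A bottom class in the first position may be turned into a top class. -/
lemma Moves.flip_zero {r m : ℕ} (h : 0 < m) {t : Fin m → Fin 3} (ht : t ⟨0, h⟩ = 0) :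
    Moves r t (Function.update t ⟨0, h⟩ 2) := by
  have hR : RopN r m 0 = R0op r m := by simp [RopN]
  have hb : Fin.rev (topI r) = botI r := by simp [Fin.ext_iff, topI, botI]
  have hlt : botI r < topI r := by simp [Fin.lt_def, topI, botI]
  refine (Moves.of_gen h (by rw [hR]; exact R0op_quad h) ?_).2
  rw [hR, patSpan, patSpan, Submodule.map_span]
  congr 1
  ext v
  constructor
  · rintro ⟨_, ⟨f, hf, rfl⟩, rfl⟩
    have h0 : f ⟨0, h⟩ = topI r := idxClass_eq_two.1 (by simp [hf])
    refine ⟨_, fun k => ?_, R0op_Mf h (by rw [h0, hb]; exact hlt)⟩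
    by_cases hk : k = ⟨0, h⟩
    · subst hk
      simp [h0, hb, ht, idxClass_eq_zero]
    · simp [hk, hf]
  · rintro ⟨f, hf, rfl⟩
    have h0 : f ⟨0, h⟩ = botI r := idxClass_eq_zero.1 (by simp [hf, ht])
    refine ⟨_, ⟨Function.update f ⟨0, h⟩ (topI r), fun k => ?_, rfl⟩, ?_⟩
    · by_cases hk : k = ⟨0, h⟩
      · subst hk
        simp [idxClass_eq_two]
      · simp [hk, hf]
    · rw [R0op_Mf h (by simpa [hb] using hlt)]
      simp [hb, ← h0]

/-! ### Normalizing a pattern -/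

/-- Adjacent transpositions generate the symmetric group, so patterns may be rearranged freely. -/
lemma Moves.perm {r n : ℕ} (σ : Equiv.Perm (Fin (n+1))) (t : Fin (n+1) → Fin 3) :
    Moves r t (t ∘ σ) := by
  have hσ : σ ∈ Submonoid.closure
      (Set.range fun i : Fin n => Equiv.swap i.castSucc i.succ) := by
    rw [Equiv.Perm.mclosure_swap_castSucc_succ]; trivial
  induction hσ using Submonoid.closure_induction generalizing t with
  | mem x hx =>
    obtain ⟨i, rfl⟩ := hx
    exact Moves.swap (p := i) (by omega) t
  | one => exact Moves.refl t
  | mul x y _ _ hx hy => exact (hx t).trans (hy (t ∘ x))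

lemma Moves.flip {r n : ℕ} (k : Fin (n+1)) {t : Fin (n+1) → Fin 3} (ht : t k = 0) :
    Moves r t (Function.update t k 2) := by
  -- Bring position `k` to the front, flip it there, and bring it back.
  have h1 := Moves.perm (r := r) (Equiv.swap 0 k) t
  have h2 := Moves.flip_zero (r := r) (Nat.succ_pos n) (t := t ∘ Equiv.swap 0 k)
    (by simpa using ht)
  have h3 := Moves.perm (r := r) (Equiv.swap 0 k)
    (Function.update (t ∘ Equiv.swap 0 k) ⟨0, Nat.succ_pos n⟩ 2)
  convert (h1.trans h2).trans h3 using 1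
  funext j
  simp only [Function.comp_apply, Function.update_apply]
  have : Equiv.swap 0 k j = (⟨0, Nat.succ_pos n⟩ : Fin (n+1)) ↔ j = k := by
    rw [Equiv.swap_apply_eq_iff]; simp
  simp only [this, Equiv.swap_apply_self]

/-- The class pattern of `V̄_{I,J}`. -/
def patIJ {m : ℕ} (I J : Finset (Fin m)) (k : Fin m) : Fin 3 :=
  if k ∈ I then 1 else if k ∈ J then 0 else 2

lemma VIJ_eq {r m : ℕ} {I J : Finset (Fin m)} (h : Disjoint I J) :
    VIJ r m I J = patSpan r (patIJ I J) := by
  unfold VIJ patSpan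
  congr 1
  ext v
  refine exists_congr fun f => and_congr_left fun _ => forall_congr' fun k => ?_
  have hk : k ∈ I → k ∉ J := fun a b => Finset.disjoint_left.1 h a b
  unfold patIJ
  split_ifs with h1 h2
  · simp [idxClass_eq_one, h1, hk h1]
  · simp [idxClass_eq_zero, h1, h2]
  · simp [idxClass_eq_two, h1, h2]

lemma Vsub_eq (r m l : ℕ) :
    Vsub r m l = patSpan r (fun k : Fin m => if (k : ℕ) < l then 1 else 2) := by
  unfold Vsub patSpan goodF
  congr 1
  ext v
  refine exists_congr fun f => and_congr_left fun _ => forall_congr' fun k => ?_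
  dsimp only
  split_ifs with h1
  · simp [idxClass_eq_one, h1]
  · simp [idxClass_eq_two, h1, not_lt.1 h1]

lemma Moves.clear {r n : ℕ} (I J : Finset (Fin (n+1))) (h : Disjoint I J) :
    Moves r (patIJ I J) (patIJ I ∅) := by
  induction J using Finset.induction_on with
  | empty => exact Moves.refl _
  | insert a s ha ih =>
    rw [Finset.disjoint_insert_right] at h
    have h1 := Moves.flip (r := r) a (t := patIJ I (insert a s)) (by simp [patIJ, h.1])
    rw [show Function.update (patIJ I (insert a s)) a 2 = patIJ I s from ?_] at h1
    · exact h1.trans (ih h.2)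
    · funext k
      by_cases hk : k = a
      · subst hk; simp [patIJ, h.1, ha]
      · simp [patIJ, hk]

lemma exists_perm_front {m : ℕ} (I : Finset (Fin m)) :
    ∃ σ : Equiv.Perm (Fin m), ∀ k : Fin m, σ k ∈ I ↔ (k : ℕ) < I.card := by
  have hI : I.card ≤ m := by simpa using I.card_le_univ
  have hc : Fintype.card {k : Fin m // (k : ℕ) < I.card} = Fintype.card {k // k ∈ I} := by
    rw [Fintype.card_coe, Fintype.card_subtype, Fin.card_filter_val_lt, min_eq_right hI]
  refine ⟨(Fintype.equivOfCardEq hc).extendSubtype, fun k => ?_⟩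
  by_cases hk : (k : ℕ) < I.card
  · exact iff_of_true ((Fintype.equivOfCardEq hc).extendSubtype_mem k hk) hk
  · exact iff_of_false ((Fintype.equivOfCardEq hc).extendSubtype_not_mem k hk) hk

/-- **Lemma 2.4.** For every `I ⊆ {1,…,m}` and every `J ⊆ {1,…,m} ∖ I` there is an
invertible operator `Ψ(ω_{I,J})`, a finite product of the operators `Ψ(H_i)^{±1}`
(`0 ≤ i ≤ m-1`), carrying `V̄_{I,J}` onto `V̄_{{1,…,#I},∅} = V^{⊗#I} ⊗ η_{r+3/2}^{⊗(m-#I)}`. -/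
theorem exists_hecke_word_moving_VIJ (r m : ℕ) (hr : 1 ≤ r) (hm : 2 ≤ m) :
    ∀ I J : Finset (Fin m), Disjoint I J →
      ∃ A B : Module.End Kq (TP r m), IsRWord r m A ∧ A * B = 1 ∧ B * A = 1 ∧
        Submodule.map A (VIJ r m I J) = Vsub r m I.card := by
  intro I J hIJ
  obtain ⟨n, rfl⟩ : ∃ n, m = n + 1 := ⟨m - 1, by omega⟩
  rw [VIJ_eq hIJ, Vsub_eq]
  obtain ⟨σ, hσ⟩ := exists_perm_front I
  have hpat : (fun k : Fin (n+1) => if (k : ℕ) < I.card then (1 : Fin 3) else 2) =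
      patIJ I ∅ ∘ σ := by
    funext k
    simp [patIJ, hσ]
  rw [hpat]
  exact (Moves.clear (r := r) I J hIJ).trans (Moves.perm σ _)
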